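/- Let a_1, …, a_9 be complex numbers and let M be the 9×9 matrix associated to three 4-cycles sharing a vertex as in the Morgan–Scott configuration (each face row-block contains columns (±1, ±a_i, ±a_i^2) for the four edges of that face, with sign depending on orientation). Then det M = (a_1 - a_2)(a_5 - a_6)(a_8 - a_9)·P(a_1,…,a_9) where P = (a_2-a_3)(a_3-a_1)(a_4-a_5)(a_6-a_4)(a_7-a_8)(a_9-a_7) - (a_2-a_4)(a_4-a_1)(a_6-a_7)(a_7-a_5)(a_3-a_8)(a_9-a_3). -/

import Mathlib

/-!
Multiplying each three-row block of `M` by the change of basis from `1, x, x²` to the Newton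
basis `1, x - p, (x - p) * (x - q)`, where `p` and `q` are the parameters of the two unshared
edges of that face, does not change the determinant (`det_newtonMatrix`). The six columns of
unshared edges become triangular with pivots `1, q - p` in each block, and what remains is the
3 × 3 determinant in the shared columns `e₃, e₄, e₇` of the values of the three quadratic Newton
polynomials. As its rows have zero pattern `* * 0`, `0 * *`, `* 0 *`, only two of its six terms
survive (`det_reducedMatrix`): these are the two products in `P`.
-/


/-- Sign pattern of the extended cycle basis matrix of the Morgan–Scott dual graph
(three 4-cycles sharing a vertex): face 0 has edges `e₁,e₂,e₃,e₄`, face 1 has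
`e₄,e₅,e₆,e₇`, face 2 has `e₇,e₈,e₉,e₃`, each shared edge appearing with opposite signs
in its two face blocks.  (Edges are 0-indexed: `e_{j+1} ↝ j`.) -/
def msSign : ℕ → ℕ → ℂ := fun f j =>
  match f, j with
  | 0, 0 => 1 | 0, 1 => 1 | 0, 2 => 1 | 0, 3 => 1
  | 1, 3 => -1 | 1, 4 => 1 | 1, 5 => 1 | 1, 6 => 1
  | 2, 6 => -1 | 2, 7 => 1 | 2, 8 => 1 | 2, 2 => -1
  | _, _ => 0

/-- Change of basis, in each of the three row blocks, from the monomials `1, x, x²` to the Newton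
basis at the two unshared edges of the face: `a 0, a 1` for the first face, `a 4, a 5` for the
second and `a 7, a 8` for the third. -/
def newtonMatrix (a : Fin 9 → ℂ) : Matrix (Fin 9) (Fin 9) ℂ :=
  !![1, 0, 0, 0, 0, 0, 0, 0, 0;
     -a 0, 1, 0, 0, 0, 0, 0, 0, 0;
     a 0 * a 1, -(a 0 + a 1), 1, 0, 0, 0, 0, 0, 0;
     0, 0, 0, 1, 0, 0, 0, 0, 0;
     0, 0, 0, -a 4, 1, 0, 0, 0, 0;
     0, 0, 0, a 4 * a 5, -(a 4 + a 5), 1, 0, 0, 0;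
     0, 0, 0, 0, 0, 0, 1, 0, 0;
     0, 0, 0, 0, 0, 0, -a 7, 1, 0;
     0, 0, 0, 0, 0, 0, a 7 * a 8, -(a 7 + a 8), 1]

theorem det_newtonMatrix (a : Fin 9 → ℂ) : (newtonMatrix a).det = 1 := by
  rw [Matrix.det_of_isLowerTriangular]
  · simp [newtonMatrix, Fin.prod_univ_succ]
  · intro i j h
    replace h : i < j := h
    fin_cases i <;> fin_cases j <;> first | rfl | (exact absurd h (by decide))

/-- The quadratic Newton polynomial `(x - aᵢ) * (x - aⱼ)` evaluated at `x = aₖ`. -/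
def newtonQuad (a : Fin 9 → ℂ) (i j k : Fin 9) : ℂ := (a k - a i) * (a k - a j)

/-- The matrix `M` after the change to the Newton basis: in the block of a face, the column of an
edge `k` of that face holds, up to its sign, the three Newton basis polynomials evaluated at
`a k`. -/
def reducedMatrix (a : Fin 9 → ℂ) : Matrix (Fin 9) (Fin 9) ℂ :=
  !![1, 1, 1, 1, 0, 0, 0, 0, 0;
     0, a 1 - a 0, a 2 - a 0, a 3 - a 0, 0, 0, 0, 0, 0;
     0, 0, newtonQuad a 0 1 2, newtonQuad a 0 1 3, 0, 0, 0, 0, 0;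
     0, 0, 0, -1, 1, 1, 1, 0, 0;
     0, 0, 0, -(a 3 - a 4), 0, a 5 - a 4, a 6 - a 4, 0, 0;
     0, 0, 0, -newtonQuad a 4 5 3, 0, 0, newtonQuad a 4 5 6, 0, 0;
     0, 0, -1, 0, 0, 0, -1, 1, 1;
     0, 0, -(a 2 - a 7), 0, 0, 0, -(a 6 - a 7), 0, a 8 - a 7;
     0, 0, -newtonQuad a 7 8 2, 0, 0, 0, -newtonQuad a 7 8 6, 0, 0]

theorem newtonMatrix_mul (a : Fin 9 → ℂ) :
    newtonMatrix a * (Matrix.of fun i j : Fin 9 =>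
      msSign ((i : ℕ) / 3) (j : ℕ) * a j ^ ((i : ℕ) % 3)) = reducedMatrix a := by
  ext i j
  -- Each row is reduced to its three-term block combination before the column is split.
  fin_cases i <;> simp [newtonMatrix, Matrix.mul_apply, Fin.sum_univ_succ] <;>
    fin_cases j <;> simp [reducedMatrix, newtonQuad, msSign] <;> ring

/-- Laplace expansion along a column with a single possibly nonzero entry. -/
theorem det_eq_of_column_single {n : ℕ} (A : Matrix (Fin (n + 1)) (Fin (n + 1)) ℂ)
    (i j : Fin (n + 1)) (h : ∀ k, k ≠ i → A k j = 0) :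
    A.det = (-1) ^ ((i : ℕ) + (j : ℕ)) * A i j *
      (A.submatrix i.succAbove j.succAbove).det := by
  rw [Matrix.det_succ_column A j, Finset.sum_eq_single i]
  · intro k _ hk
    rw [h k hk]
    ring
  · simp

theorem det_reducedMatrix (a : Fin 9 → ℂ) :
    (reducedMatrix a).det = (a 1 - a 0) * (a 5 - a 4) * (a 8 - a 7) *
      (newtonQuad a 0 1 2 * newtonQuad a 4 5 3 * newtonQuad a 7 8 6 -
        newtonQuad a 0 1 3 * newtonQuad a 4 5 6 * newtonQuad a 7 8 2) := by
  -- Expanding along the columns of `e₁, e₂, e₅, e₆, e₈, e₉` in this order, each of them has at most one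
  -- nonzero entry left when its turn comes; the indices below account for the deleted columns.
  rw [det_eq_of_column_single (n := 8) _ 0 0, det_eq_of_column_single (n := 7) _ 0 0,
    det_eq_of_column_single (n := 6) _ 1 2, det_eq_of_column_single (n := 5) _ 1 2,
    det_eq_of_column_single (n := 4) _ 2 3, det_eq_of_column_single (n := 3) _ 2 3,
    Matrix.det_fin_three]
  · simp [reducedMatrix, Fin.succAbove]
    ring
  all_goals
    intro k hk
    fin_cases k <;> first | rfl | exact absurd rfl hk

/-- Morgan–Scott determinant.  For the 9×9 extended cycle basis
matrix `M` of the three 4-cycles sharing a vertex (rows in three blocks of three, the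
block of face `f` having in the column of each of its edges `e_j` the entries
`±(1, aⱼ, aⱼ²)` with sign `msSign f j`), one has
`det M = (a₁-a₂)(a₅-a₆)(a₈-a₉)·P` where
`P = (a₂-a₃)(a₃-a₁)(a₄-a₅)(a₆-a₄)(a₇-a₈)(a₉-a₇)
   - (a₂-a₄)(a₄-a₁)(a₆-a₇)(a₇-a₅)(a₃-a₈)(a₉-a₃)`. -/
theorem morgan_scott_det (a : Fin 9 → ℂ) :
    let M : Matrix (Fin 9) (Fin 9) ℂ := Matrix.of fun i j =>
      msSign ((i : ℕ) / 3) (j : ℕ) * a j ^ ((i : ℕ) % 3)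
    let P : ℂ := (a 1 - a 2) * (a 2 - a 0) * (a 3 - a 4) * (a 5 - a 3) *
        (a 6 - a 7) * (a 8 - a 6) -
      (a 1 - a 3) * (a 3 - a 0) * (a 5 - a 6) * (a 6 - a 4) *
        (a 2 - a 7) * (a 8 - a 2)
    M.det = (a 0 - a 1) * (a 4 - a 5) * (a 7 - a 8) * P := by
  intro M P
  calc M.det = (newtonMatrix a * M).det := by
        rw [Matrix.det_mul, det_newtonMatrix, one_mul]
    _ = _ := by
        rw [newtonMatrix_mul, det_reducedMatrix]
        simp only [newtonQuad, P]
        ring
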